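/- Let 1 ≤ i ≤ n and let w, x ∈ B satisfy w c_i a_i b_i + x c_{i−1} = 0. Then there exist w', w'', x' ∈ B such that w = w' + w'' c_{i−1} and x = w' a_{i−1} b_{i−1} + x' c_{i−2} (here c_{i−2} = 0 when i = 1, by the stated conventions). -/

import Mathlib

noncomputable section

inductive Gen (n : ℕ) : Type
  | a : Fin (n+1) → Gen n
  | b : Fin (n+1) → Gen n
  | c : Fin (n+1) → Gen n

variable (K : Type) [Field K] (n : ℕ)

/-- The tensor algebra `T(V)` on the span of the generators, i.e. the free algebra. -/
abbrev FA := FreeAlgebra K (Gen n)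

/-- `a_i`, with the convention that out-of-range indices give `0`. -/
def ga (i : ℤ) : FA K n :=
  if h : 0 ≤ i ∧ i ≤ (n : ℤ) then FreeAlgebra.ι K (Gen.a ⟨i.toNat, by omega⟩) else 0

def gb (i : ℤ) : FA K n :=
  if h : 0 ≤ i ∧ i ≤ (n : ℤ) then FreeAlgebra.ι K (Gen.b ⟨i.toNat, by omega⟩) else 0

def gc (i : ℤ) : FA K n :=
  if h : 0 ≤ i ∧ i ≤ (n : ℤ) then FreeAlgebra.ι K (Gen.c ⟨i.toNat, by omega⟩) else 0

/-- The set `R` of defining relations. -/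
def rels : Set (FA K n) :=
  { x | x = ga K n n * gb K n n * gc K n n ∨ x = gc K n 0 * ga K n 0 ∨
      ∃ i : ℕ, i < n ∧
        (x = ga K n i * gb K n i * gc K n i + gc K n (i+1) * ga K n (i+1) * gb K n (i+1) ∨
         x = gb K n (i+1) * gc K n (i+1) * ga K n (i+1) ∨
         x = gc K n i * gc K n (i+1) ∨
         x = gb K n (i+1) * ga K n i) }

/-- The relation whose ring-quotient is `B = T(V)/⟨R⟩`. -/
def BRel (x y : FA K n) : Prop := x ∈ rels K n ∧ y = 0

/-- The algebra `B = T(V)/⟨R⟩`. -/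
abbrev B := RingQuot (BRel K n)

/-- The quotient map `π_B : T(V) → B`. -/
def πB : FA K n →ₐ[K] B K n := RingQuot.mkAlgHom K (BRel K n)

/-- The image of `a_i` in `B` (zero for out-of-range indices). -/
def aB (i : ℤ) : B K n := πB K n (ga K n i)
def bB (i : ℤ) : B K n := πB K n (gb K n i)
def cB (i : ℤ) : B K n := πB K n (gc K n i)

/-- The left annihilator of `x`, as a left ideal of `B`. -/
def lann (x : B K n) : Ideal (B K n) where
  carrier := {w | w * x = 0}
  add_mem' := by
    intro a b ha hb
    simp only [Set.mem_setOf_eq, add_mul] at *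
    rw [ha, hb, add_zero]
  zero_mem' := by simp
  smul_mem' := by
    intro c w hw
    simp only [Set.mem_setOf_eq, smul_eq_mul, mul_assoc] at *
    rw [hw, mul_zero]

end

/-!
The idea is that the left `B`-module `B₊` spanned by words of positive length is presented by the
letters, with one relation per element of `R`, read off from the last letters of its words: given
a left module `Q` and vectors `q x` subject to these relations, `u x ↦ u • q x` is well defined,
because `Q ⊕ K` becomes a `B`-module in which `x` sends `(0, 1)` to `(q x, 0)`.

Comparing last letters in this way, `u c_j = 0` with `j < n` forces `u = β a_j b_j + γ c_{j-1}`
with `β c_{j+1} a_{j+1} = 0`; comparing the last letters `a_{j+1}` and then `c_{j+1}` in this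
equation gives `β ∈ B b_{j+1} + B c_j`, so that `β a_j b_j ∈ B c_{j-1}`. Hence the left annihilator
of `c_j` is `B c_{j-1}`. As `c_i a_i b_i = - a_{i-1} b_{i-1} c_{i-1}`, the hypothesis of the theorem
says that `x - w a_{i-1} b_{i-1}` annihilates `c_{i-1}`.
-/

theorem smul_mkQ_one_eq_zero {R : Type*} [Ring R] {L : Ideal R} {u : R} :
    u • L.mkQ 1 = 0 ↔ u ∈ L := by
  rw [← map_smul, smul_eq_mul, mul_one, Submodule.mkQ_apply, Submodule.Quotient.mk_eq_zero]

section TrivialExtension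

variable {K X A Q : Type*} [CommRing K] [Ring A] [Algebra K A] [AddCommGroup Q] [Module K Q]
  [Module A Q] [IsScalarTower K A Q]

/-- The action of the free algebra on `Q × K` extending its action on the `A`-module `Q` (through
`π`) by the trivial module `K`, on which every letter acts as `0`; the letter `x` sends `(0, 1)` to
`(q x, 0)`. -/
noncomputable def extensionAction (π : FreeAlgebra K X →ₐ[K] A) (q : X → Q) :
    FreeAlgebra K X →ₐ[K] Module.End K (Q × K) :=
  FreeAlgebra.lift K fun x =>
    LinearMap.inl K Q K ∘ₗ
      (Algebra.lsmul K K Q (π (FreeAlgebra.ι K x))).coprod (LinearMap.toSpanSingleton K Q (q x))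

theorem extensionAction_ι_apply (π : FreeAlgebra K X →ₐ[K] A) (q : X → Q) (x : X) (m : Q) (k : K) :
    extensionAction π q (FreeAlgebra.ι K x) (m, k) = (π (FreeAlgebra.ι K x) • m + k • q x, 0) := by
  simp [extensionAction]

theorem extensionAction_apply_inl (π : FreeAlgebra K X →ₐ[K] A) (q : X → Q) (f : FreeAlgebra K X)
    (m : Q) : extensionAction π q f (m, 0) = (π f • m, 0) := by
  induction f using FreeAlgebra.induction generalizing m with
  | grade0 r => simp [Algebra.algebraMap_eq_smul_one]
  | grade1 x => simp [extensionAction_ι_apply]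
  | mul f g hf hg => simp [hf, hg, mul_smul]
  | add f g hf hg => simp [hf, hg, add_smul]

theorem extensionAction_mul_ι_apply_inr_one (π : FreeAlgebra K X →ₐ[K] A) (q : X → Q)
    (f : FreeAlgebra K X) (x : X) :
    extensionAction π q (f * FreeAlgebra.ι K x) (0, 1) = (π f • q x, 0) := by
  simp [extensionAction_ι_apply, extensionAction_apply_inl]

theorem exists_linearMap_apply_mul_mkAlgHom_ι {s : FreeAlgebra K X → FreeAlgebra K X → Prop}
    [Module (RingQuot s) Q] [IsScalarTower K (RingQuot s) Q] (q : X → Q)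
    (hq : ∀ ⦃f g⦄, s f g → extensionAction (RingQuot.mkAlgHom K s) q f (0, 1) =
      extensionAction (RingQuot.mkAlgHom K s) q g (0, 1)) :
    ∃ δ : RingQuot s →ₗ[K] Q, ∀ u x,
      δ (u * RingQuot.mkAlgHom K s (FreeAlgebra.ι K x)) = u • q x := by
  set ρ := extensionAction (RingQuot.mkAlgHom K s) q
  have ρ_eq ⦃f g : FreeAlgebra K X⦄ (hfg : s f g) : ρ f = ρ g := by
    refine LinearMap.prod_ext (LinearMap.ext fun m => ?_) (LinearMap.ext_ring (hq hfg))
    simp [ρ, extensionAction_apply_inl, RingQuot.mkAlgHom_rel K hfg]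
  let ρ' : RingQuot s →ₐ[K] Module.End K (Q × K) := RingQuot.liftAlgHom K ⟨ρ, ρ_eq⟩
  refine ⟨LinearMap.fst K Q K ∘ₗ LinearMap.applyₗ (0, 1) ∘ₗ ρ'.toLinearMap, fun u x => ?_⟩
  obtain ⟨f, rfl⟩ := RingQuot.mkAlgHom_surjective K s u
  have ρ'_apply : ρ' (RingQuot.mkAlgHom K s (f * FreeAlgebra.ι K x)) = ρ (f * FreeAlgebra.ι K x) :=
    RingQuot.liftAlgHom_mkAlgHom_apply ..
  rw [← map_mul, LinearMap.comp_apply, LinearMap.comp_apply, AlgHom.toLinearMap_apply, ρ'_apply,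
    LinearMap.applyₗ_apply_apply, extensionAction_mul_ι_apply_inr_one, LinearMap.fst_apply]

end TrivialExtension

section Relations

variable {K : Type} [Field K] {n : ℕ}

theorem πB_eq_zero_of_mem_rels {f : FA K n} (hf : f ∈ rels K n) : πB K n f = 0 := by
  simpa [πB] using RingQuot.mkAlgHom_rel K (s := BRel K n) ⟨hf, rfl⟩

theorem cB_zero_mul_aB_zero : cB K n 0 * aB K n 0 = 0 := by
  simpa [cB, aB] using πB_eq_zero_of_mem_rels (K := K) (n := n) (Or.inr (Or.inl rfl))

theorem cB_mul_cB_succ {i : ℕ} (hi : i < n) : cB K n i * cB K n (i + 1) = 0 := by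
  simpa [cB] using πB_eq_zero_of_mem_rels (K := K)
    (Or.inr (Or.inr ⟨i, hi, Or.inr (Or.inr (Or.inl rfl))⟩))

theorem bB_succ_mul_aB {i : ℕ} (hi : i < n) : bB K n (i + 1) * aB K n i = 0 := by
  simpa [bB, aB] using πB_eq_zero_of_mem_rels (K := K)
    (Or.inr (Or.inr ⟨i, hi, Or.inr (Or.inr (Or.inr rfl))⟩))

theorem aB_mul_bB_mul_cB_add_succ {i : ℕ} (hi : i < n) :
    aB K n i * bB K n i * cB K n i + cB K n (i + 1) * aB K n (i + 1) * bB K n (i + 1) = 0 := by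
  simpa [aB, bB, cB] using πB_eq_zero_of_mem_rels (K := K) (Or.inr (Or.inr ⟨i, hi, Or.inl rfl⟩))

theorem cB_eq_zero_of_neg {i : ℤ} (hi : i < 0) : cB K n i = 0 := by
  simp [cB, gc, hi.not_ge]

theorem cB_eq_zero_of_lt {i : ℤ} (hi : n < i) : cB K n i = 0 := by
  simp [cB, gc, hi.not_ge]

theorem bB_eq_zero_of_lt {i : ℤ} (hi : n < i) : bB K n i = 0 := by
  simp [bB, gb, hi.not_ge]

theorem aB_pred_mul_bB_pred_mul_cB_pred_add {i : ℕ} (hi : i ≤ n) :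
    aB K n (i - 1) * bB K n (i - 1) * cB K n (i - 1) + cB K n i * aB K n i * bB K n i = 0 := by
  cases i with
  | zero => simp [cB_zero_mul_aB_zero, cB_eq_zero_of_neg]
  | succ j => simpa using aB_mul_bB_mul_cB_add_succ (K := K) hi

theorem cB_mul_aB_mul_bB_mem_span {i : ℕ} (hi : i ≤ n) :
    cB K n i * aB K n i * bB K n i ∈ Ideal.span {cB K n (i - 1)} := by
  have habc : aB K n (i - 1) * bB K n (i - 1) * cB K n (i - 1) ∈ Ideal.span {cB K n (i - 1)} :=
    Ideal.mul_mem_left _ _ (Ideal.mem_span_singleton_self _)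
  rw [← Submodule.add_mem_iff_right _ habc, aB_pred_mul_bB_pred_mul_cB_pred_add hi]
  exact zero_mem _

theorem cB_pred_mul_cB {i : ℕ} (hi : i ≤ n) : cB K n (i - 1) * cB K n i = 0 := by
  cases i with
  | zero => simp [cB_eq_zero_of_neg]
  | succ j => simpa using cB_mul_cB_succ (K := K) hi

end Relations

section LastLetter

variable {K : Type} [Field K] {n : ℕ} {Q : Type*} [AddCommGroup Q] [Module (B K n) Q]

variable (K n) in
/-- The relations between vectors `qa i`, `qb i`, `qc i` of a left `B`-module under which the rules
`u a_i ↦ u • qa i`, `u b_i ↦ u • qb i`, `u c_i ↦ u • qc i` respect `R`: one for each element of `R`,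
with the last letter of each word replaced by the corresponding vector. Only the values at indices
in `[0, n]` matter. -/
structure RespectsRels (qa qb qc : ℤ → Q) : Prop where
  abc_last : (aB K n n * bB K n n) • qc n = 0
  ca_zero : cB K n 0 • qa 0 = 0
  abc_add_cab (i : ℕ) (hi : i < n) :
    (aB K n i * bB K n i) • qc i + (cB K n (i + 1) * aB K n (i + 1)) • qb (i + 1) = 0
  bca (i : ℕ) (hi : i < n) : (bB K n (i + 1) * cB K n (i + 1)) • qa (i + 1) = 0
  cc (i : ℕ) (hi : i < n) : cB K n i • qc (i + 1) = 0
  ba (i : ℕ) (hi : i < n) : bB K n (i + 1) • qa i = 0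

namespace RespectsRels

theorem single_a {i : ℕ} (hi : 0 < i) {s : Q} (hbc : (bB K n i * cB K n i) • s = 0)
    (hb : bB K n (i + 1) • s = 0) : RespectsRels K n (Pi.single (i : ℤ) s) 0 0 where
  abc_last := by simp
  ca_zero := by rw [Pi.single_eq_of_ne (by omega), smul_zero]
  abc_add_cab := by simp
  bca k _ := by
    obtain hk | hk := eq_or_ne ((k : ℤ) + 1) i
    · rwa [hk, Pi.single_eq_same]
    · rw [Pi.single_eq_of_ne hk, smul_zero]
  cc := by simp
  ba k _ := by
    obtain hk | hk := eq_or_ne (k : ℤ) i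
    · rwa [hk, Pi.single_eq_same]
    · rw [Pi.single_eq_of_ne hk, smul_zero]

theorem single_b_c {i : ℕ} {s t : Q}
    (habc : (aB K n i * bB K n i) • s + (cB K n (i + 1) * aB K n (i + 1)) • t = 0)
    (hc : cB K n (i - 1) • s = 0) :
    RespectsRels K n 0 (Pi.single ((i : ℤ) + 1) t) (Pi.single (i : ℤ) s) where
  abc_last := by
    obtain hk | hk := eq_or_ne (n : ℤ) i
    · rw [hk, Pi.single_eq_same, ← hk]
      have hcn : cB K n (n + 1) = 0 := cB_eq_zero_of_lt (lt_add_one _)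
      rwa [← hk, hcn, zero_mul, zero_smul, add_zero] at habc
    · rw [Pi.single_eq_of_ne hk, smul_zero]
  ca_zero := by simp
  abc_add_cab k _ := by
    obtain hk | hk := eq_or_ne (k : ℤ) i
    · rwa [hk, Pi.single_eq_same, Pi.single_eq_same]
    · rw [Pi.single_eq_of_ne hk, Pi.single_eq_of_ne (by omega), smul_zero, smul_zero, add_zero]
  bca := by simp
  cc k _ := by
    obtain hk | hk := eq_or_ne ((k : ℤ) + 1) i
    · rwa [hk, Pi.single_eq_same, eq_sub_of_add_eq hk]
    · rw [Pi.single_eq_of_ne hk, smul_zero]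
  ba := by simp

end RespectsRels

variable [Module K Q] [IsScalarTower K (B K n) Q]

/-- The family indexed by the letters that is given by three sequences of vectors. -/
def Gen.elim (qa qb qc : ℤ → Q) : Gen n → Q
  | a i => qa (i : ℕ)
  | b i => qb (i : ℕ)
  | c i => qc (i : ℕ)

variable {qa qb qc : ℤ → Q}

theorem extensionAction_mul_ga (f : FA K n) {i : ℤ} (h₀ : 0 ≤ i) (hn : i ≤ n) :
    extensionAction (πB K n) (Gen.elim qa qb qc) (f * ga K n i) (0, 1) = (πB K n f • qa i, 0) := by
  rw [ga, dif_pos ⟨h₀, hn⟩, extensionAction_mul_ι_apply_inr_one, Gen.elim, Int.toNat_of_nonneg h₀]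

theorem extensionAction_mul_gb (f : FA K n) {i : ℤ} (h₀ : 0 ≤ i) (hn : i ≤ n) :
    extensionAction (πB K n) (Gen.elim qa qb qc) (f * gb K n i) (0, 1) = (πB K n f • qb i, 0) := by
  rw [gb, dif_pos ⟨h₀, hn⟩, extensionAction_mul_ι_apply_inr_one, Gen.elim, Int.toNat_of_nonneg h₀]

theorem extensionAction_mul_gc (f : FA K n) {i : ℤ} (h₀ : 0 ≤ i) (hn : i ≤ n) :
    extensionAction (πB K n) (Gen.elim qa qb qc) (f * gc K n i) (0, 1) = (πB K n f • qc i, 0) := by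
  rw [gc, dif_pos ⟨h₀, hn⟩, extensionAction_mul_ι_apply_inr_one, Gen.elim, Int.toNat_of_nonneg h₀]

namespace RespectsRels

theorem extensionAction_eq_zero (hq : RespectsRels K n qa qb qc) {f : FA K n} (hf : f ∈ rels K n) :
    extensionAction (πB K n) (Gen.elim qa qb qc) f (0, 1) = 0 := by
  rcases hf with rfl | rfl | ⟨i, hi, rfl | rfl | rfl | rfl⟩
  · rw [extensionAction_mul_gc _ (by omega) le_rfl, map_mul]
    exact Prod.ext hq.abc_last rfl
  · rw [extensionAction_mul_ga _ le_rfl (by omega)]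
    exact Prod.ext hq.ca_zero rfl
  · rw [map_add, LinearMap.add_apply, extensionAction_mul_gc _ (by omega) (by omega),
      extensionAction_mul_gb _ (by omega) (by omega), map_mul, map_mul]
    exact Prod.ext (hq.abc_add_cab i hi) (add_zero 0)
  · rw [extensionAction_mul_ga _ (by omega) (by omega), map_mul]
    exact Prod.ext (hq.bca i hi) rfl
  · rw [extensionAction_mul_gc _ (by omega) (by omega)]
    exact Prod.ext (hq.cc i hi) rfl
  · rw [extensionAction_mul_ga _ (by omega) (by omega)]
    exact Prod.ext (hq.ba i hi) rfl

theorem exists_linearMap (hq : RespectsRels K n qa qb qc) :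
    ∃ δ : B K n →ₗ[K] Q, ∀ u, ∀ i : ℕ, i ≤ n →
      δ (u * aB K n i) = u • qa i ∧ δ (u * bB K n i) = u • qb i ∧ δ (u * cB K n i) = u • qc i := by
  obtain ⟨δ, hδ⟩ := exists_linearMap_apply_mul_mkAlgHom_ι (s := BRel K n) (Gen.elim qa qb qc) <| by
    rintro f _ ⟨hf, rfl⟩
    rw [map_zero, LinearMap.zero_apply]
    exact hq.extensionAction_eq_zero hf
  refine ⟨δ, fun u i hi => ?_⟩
  have hi' : (0 : ℤ) ≤ i ∧ (i : ℤ) ≤ n := by omega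
  simp only [aB, bB, cB, ga, gb, gc, dif_pos hi', πB, hδ, Gen.elim, Int.toNat_natCast, and_self]

end RespectsRels

end LastLetter

section Annihilators

variable {K : Type} [Field K] {n : ℕ}

theorem mem_lann {x u : B K n} : u ∈ lann K n x ↔ u * x = 0 :=
  Iff.rfl

theorem lann_aB_le {i : ℕ} (h₀ : 0 < i) (hn : i ≤ n) :
    lann K n (aB K n i) ≤ Ideal.span {bB K n i * cB K n i, bB K n (i + 1)} := by
  intro u hu
  set L : Ideal (B K n) := Ideal.span {bB K n i * cB K n i, bB K n (i + 1)}
  obtain ⟨δ, hδ⟩ := (RespectsRels.single_a h₀ (s := L.mkQ 1)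
    (smul_mkQ_one_eq_zero.2 (Ideal.subset_span (Or.inl rfl)))
    (smul_mkQ_one_eq_zero.2 (Ideal.subset_span (Or.inr rfl)))).exists_linearMap
  refine smul_mkQ_one_eq_zero.1 ?_
  calc u • L.mkQ 1 = δ (u * aB K n i) := by rw [(hδ u i hn).1, Pi.single_eq_same]
    _ = 0 := by rw [mem_lann.1 hu, map_zero]

theorem mem_span_of_mul_cB_eq_mul_bB_succ {i : ℕ} (hn : i ≤ n) {u v : B K n}
    (h : u * cB K n i = v * bB K n (i + 1)) :
    u ∈ Ideal.span {aB K n i * bB K n i, cB K n (i - 1)} := by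
  set L : Ideal (B K n) := Ideal.span {aB K n i * bB K n i, cB K n (i - 1)}
  have hab : (aB K n i * bB K n i) • L.mkQ 1 = 0 :=
    smul_mkQ_one_eq_zero.2 (Ideal.subset_span (Or.inl rfl))
  have hc : cB K n (i - 1) • L.mkQ 1 = 0 :=
    smul_mkQ_one_eq_zero.2 (Ideal.subset_span (Or.inr rfl))
  obtain ⟨δ, hδ⟩ := (RespectsRels.single_b_c (t := 0) (by rw [hab, smul_zero, add_zero])
    hc).exists_linearMap
  have hδb : δ (v * bB K n (i + 1)) = 0 := by
    obtain hlt | rfl := hn.lt_or_eq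
    · simpa using (hδ v (i + 1) hlt).2.1
    · rw [bB_eq_zero_of_lt (lt_add_one _), mul_zero, map_zero]
  refine smul_mkQ_one_eq_zero.1 ?_
  calc u • L.mkQ 1 = δ (u * cB K n i) := by rw [(hδ u i hn).2.2, Pi.single_eq_same]
    _ = 0 := by rw [h, hδb]

theorem exists_eq_add_of_mul_cB_eq_zero {i : ℕ} (hn : i ≤ n) {u : B K n} (hu : u * cB K n i = 0) :
    ∃ v w, u = v * (aB K n i * bB K n i) + w * cB K n (i - 1) ∧
      v * (cB K n (i + 1) * aB K n (i + 1)) = 0 := by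
  set N : Submodule (B K n) (B K n × B K n) := Submodule.span (B K n)
    {(aB K n i * bB K n i, cB K n (i + 1) * aB K n (i + 1)), (cB K n (i - 1), 0)}
  have habc : (aB K n i * bB K n i) • N.mkQ (1, 0) +
      (cB K n (i + 1) * aB K n (i + 1)) • N.mkQ (0, 1) = 0 := by
    rw [← map_smul, ← map_smul, ← map_add, Submodule.mkQ_apply, Submodule.Quotient.mk_eq_zero]
    exact Submodule.subset_span (by simp)
  have hc : cB K n (i - 1) • N.mkQ (1, 0) = 0 := by
    rw [← map_smul, Submodule.mkQ_apply, Submodule.Quotient.mk_eq_zero]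
    exact Submodule.subset_span (by simp)
  obtain ⟨δ, hδ⟩ := (RespectsRels.single_b_c habc hc).exists_linearMap
  have huN : u • N.mkQ (1, 0) = 0 := by
    calc u • N.mkQ (1, 0) = δ (u * cB K n i) := by rw [(hδ u i hn).2.2, Pi.single_eq_same]
      _ = 0 := by rw [hu, map_zero]
  rw [← map_smul, Submodule.mkQ_apply, Submodule.Quotient.mk_eq_zero,
    Submodule.mem_span_pair] at huN
  obtain ⟨v, w, hvw⟩ := huN
  exact ⟨v, w, by simpa using congrArg Prod.fst hvw.symm, by simpa using congrArg Prod.snd hvw⟩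

theorem mul_aB_mul_bB_mem_span {j : ℕ} (hj : j < n) {v : B K n}
    (hv : v * (cB K n (j + 1) * aB K n (j + 1)) = 0) :
    v * (aB K n j * bB K n j) ∈ Ideal.span {cB K n (j - 1)} := by
  have hvc : v * cB K n (j + 1) ∈ lann K n (aB K n (j + 1)) := by
    rw [mem_lann, mul_assoc, hv]
  obtain ⟨p, q, hpq⟩ := Ideal.mem_span_pair.1 (lann_aB_le j.succ_pos hj hvc)
  rw [Nat.cast_succ] at hpq
  have hsub : (v - p * bB K n (j + 1)) * cB K n (j + 1) = q * bB K n (j + 1 + 1) := by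
    rw [sub_mul, ← hpq, mul_assoc, add_sub_cancel_left]
  obtain ⟨y, z, hyz⟩ := Ideal.mem_span_pair.1 (mem_span_of_mul_cB_eq_mul_bB_succ hj hsub)
  rw [Nat.cast_succ, add_sub_cancel_right] at hyz
  have hv_eq : v = (p + y * aB K n (j + 1)) * bB K n (j + 1) + z * cB K n j := by
    rw [add_mul, mul_assoc y, add_assoc, hyz, add_sub_cancel]
  have hvab : v * (aB K n j * bB K n j) = z * (cB K n j * aB K n j * bB K n j) := calc
    v * (aB K n j * bB K n j) = (p + y * aB K n (j + 1)) * (bB K n (j + 1) * aB K n j) * bB K n j +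
        z * (cB K n j * aB K n j * bB K n j) := by simp only [hv_eq, add_mul, mul_assoc]
    _ = z * (cB K n j * aB K n j * bB K n j) := by
      rw [bB_succ_mul_aB hj, mul_zero, zero_mul, zero_add]
  rw [hvab]
  exact Ideal.mul_mem_left _ z (cB_mul_aB_mul_bB_mem_span hj.le)

theorem lann_cB {j : ℕ} (hj : j < n) : lann K n (cB K n j) = Ideal.span {cB K n (j - 1)} := by
  refine le_antisymm (fun u hu => ?_) ?_
  · obtain ⟨v, w, rfl, hv⟩ := exists_eq_add_of_mul_cB_eq_zero hj.le (mem_lann.1 hu)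
    exact add_mem (mul_aB_mul_bB_mem_span hj hv)
      (Ideal.mul_mem_left _ w (Ideal.mem_span_singleton_self _))
  · rw [Ideal.span_singleton_le_iff_mem, mem_lann, cB_pred_mul_cB hj.le]

end Annihilators

/-- Lemma 3.3(1). -/
theorem stmt_8 (K : Type) [Field K] (n : ℕ) (i : ℕ) (h1 : 1 ≤ i) (h2 : i ≤ n)
    (w x : B K n)
    (h : w * (cB K n i * aB K n i * bB K n i) + x * cB K n ((i : ℤ) - 1) = 0) :
    ∃ w' w'' x' : B K n,
      w = w' + w'' * cB K n ((i : ℤ) - 1) ∧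
      x = w' * (aB K n ((i : ℤ) - 1) * bB K n ((i : ℤ) - 1)) + x' * cB K n ((i : ℤ) - 2) := by
  have hw : w * (cB K n i * aB K n i * bB K n i) +
      w * (aB K n ((i : ℤ) - 1) * bB K n ((i : ℤ) - 1)) * cB K n ((i : ℤ) - 1) = 0 := by
    rw [mul_assoc w (_ * _), ← mul_add, add_comm, aB_pred_mul_bB_pred_mul_cB_pred_add h2, mul_zero]
  have hx : x - w * (aB K n ((i : ℤ) - 1) * bB K n ((i : ℤ) - 1)) ∈
      lann K n (cB K n ((i : ℤ) - 1)) := by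
    rw [mem_lann, sub_mul, sub_eq_zero]
    exact add_left_cancel (h.trans hw.symm)
  rw [← Nat.cast_pred h1, lann_cB (by omega), Ideal.mem_span_singleton', Nat.cast_pred h1] at hx
  obtain ⟨x', hx'⟩ := hx
  refine ⟨w, 0, x', by rw [zero_mul, add_zero], ?_⟩
  rw [show (i : ℤ) - 2 = i - 1 - 1 by ring, hx', add_sub_cancel]
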